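/- arXiv:1810.09129 — 2 statements merged into one kernel-verified Lean document; each statement's English description precedes it below -/
import Mathlib

section
/- Let H(m,n) be the special Heisenberg Lie superalgebra with even center of dimension (2m+1 | n) over a field of characteristic ≠ 2,3. Then dim M(H(m,n)) = 2m² - m - 1 + 2mn + n(n+1)/2 if m+n ≥ 2; dim M(H(0,1)) = 0; and dim M(H(1,0)) = 2. -/
open Module Function TensorProduct

/-- A Lie superalgebra over a field `K`, encoded via a grading involution `J`
(the even part is the `+1`-eigenspace, the odd part the `-1`-eigenspace),
a bilinear bracket `br` satisfying graded skew-symmetry and the graded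
Jacobi identity on homogeneous elements. -/
structure SuperLie (K : Type) [Field K] : Type 1 where
  carrier : Type
  [acg : AddCommGroup carrier]
  [mod : Module K carrier]
  J : carrier →ₗ[K] carrier
  br : carrier →ₗ[K] carrier →ₗ[K] carrier
  J_inv : ∀ x, J (J x) = x
  J_br : ∀ x y, J (br x y) = br (J x) (J y)
  skew_e : ∀ x y, J x = x → br x y = - br y x
  skew_o : ∀ x y, J x = -x → J y = -y → br x y = br y x
  jacobi : ∀ (a b c : Bool) (x y z : carrier),
    J x = (if a then -x else x) → J y = (if b then -y else y) →
    J z = (if c then -z else z) →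
    (if a && c then (-1 : K) else 1) • br x (br y z)
      + (if b && a then (-1 : K) else 1) • br y (br z x)
      + (if c && b then (-1 : K) else 1) • br z (br x y) = 0

attribute [instance] SuperLie.acg SuperLie.mod

namespace SuperLie

variable {K : Type} [Field K]

/-- The even part `L₀`. -/
def evenPart (A : SuperLie K) : Submodule K A.carrier :=
  LinearMap.ker (A.J - LinearMap.id)

/-- The odd part `L₁`. -/
def oddPart (A : SuperLie K) : Submodule K A.carrier :=
  LinearMap.ker (A.J + LinearMap.id)

/-- The center `Z(L) = {z | [z,x] = 0 for all x}`. -/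
def center (A : SuperLie K) : Submodule K A.carrier :=
  ⨅ y, LinearMap.ker (A.br.flip y)

/-- The derived subalgebra `L' = [L,L]`. -/
def derived (A : SuperLie K) : Submodule K A.carrier :=
  Submodule.span K {z | ∃ x y, A.br x y = z}

/-- The descending central series `C⁰(L) = L`, `C^{k+1}(L) = [C^k(L), L]`. -/
def lcs (A : SuperLie K) : ℕ → Submodule K A.carrier
  | 0 => ⊤
  | (k+1) => Submodule.span K {z | ∃ x ∈ lcs A k, ∃ y, A.br x y = z}

/-- The second center `Z₂(L)`: those `x` with `[x,y] ∈ Z(L)` for all `y`. -/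
def Z2 (A : SuperLie K) : Submodule K A.carrier :=
  ⨅ y, Submodule.comap (A.br.flip y) A.center

/-- Nilpotency: the descending central series terminates at zero. -/
def IsNilpotent (A : SuperLie K) : Prop := ∃ k, A.lcs k = ⊥

/-- Abelian: identically vanishing bracket. -/
def IsAbelian (A : SuperLie K) : Prop := ∀ x y, A.br x y = 0

/-- A homomorphism of Lie superalgebras: an even linear map commuting with the
grading and preserving brackets. -/
structure Hom (A B : SuperLie K) where
  toLin : A.carrier →ₗ[K] B.carrier
  map_J : ∀ x, toLin (A.J x) = B.J (toLin x)
  map_br : ∀ x y, toLin (A.br x y) = B.br (toLin x) (toLin y)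

/-- The dimension of the Schur multiplier `M(A)`, characterized as the maximal
dimension of the kernel of a stem extension `0 → M → B → A → 0`
(i.e. `M = ker f ⊆ Z(B) ∩ B'`); a stem extension of maximal dimension is a
stem cover, whose kernel is isomorphic to the Schur multiplier
`M(A) = ([F,F] ∩ R)/[F,R]` coming from any free presentation `0 → R → F → A → 0`. -/
noncomputable def multDim (A : SuperLie K) : ℕ :=
  sSup {d | ∃ (B : SuperLie K) (f : Hom B A),
    Surjective f.toLin ∧
    LinearMap.ker f.toLin ≤ B.center ⊓ B.derived ∧
    finrank K (LinearMap.ker f.toLin) = d}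

/-- `A ≅ H(0,1)`: basis `z` (even), `y` (odd), `[y,y] = z`, `z` central. -/
def IsH01 (A : SuperLie K) : Prop :=
  ∃ z y : A.carrier, z ∈ A.evenPart ∧ y ∈ A.oddPart ∧
    LinearIndependent K ![z, y] ∧
    Submodule.span K ({z, y} : Set A.carrier) = ⊤ ∧
    A.br y y = z ∧ z ∈ A.center

/-- `A ≅ H(1,0)`: the purely even 3-dimensional Heisenberg algebra. -/
def IsH10 (A : SuperLie K) : Prop :=
  ∃ x y z : A.carrier, x ∈ A.evenPart ∧ y ∈ A.evenPart ∧ z ∈ A.evenPart ∧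
    LinearIndependent K ![x, y, z] ∧
    Submodule.span K ({x, y, z} : Set A.carrier) = ⊤ ∧
    A.br x y = z ∧ z ∈ A.center

/-- `A ≅ H(0,2)`: even basis `{z}`, odd basis `{y₁,y₂}`, `[yᵢ,yᵢ] = z`. -/
def IsH02 (A : SuperLie K) : Prop :=
  ∃ z y₁ y₂ : A.carrier, z ∈ A.evenPart ∧ y₁ ∈ A.oddPart ∧ y₂ ∈ A.oddPart ∧
    LinearIndependent K ![z, y₁, y₂] ∧
    Submodule.span K ({z, y₁, y₂} : Set A.carrier) = ⊤ ∧
    A.br y₁ y₁ = z ∧ A.br y₂ y₂ = z ∧ A.br y₁ y₂ = 0 ∧ z ∈ A.center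

/-- `A ≅ H₁`: even basis `{x}`, odd basis `{y,z}`, `[x,y] = z`, `z` central. -/
def IsHodd1 (A : SuperLie K) : Prop :=
  ∃ x y z : A.carrier, x ∈ A.evenPart ∧ y ∈ A.oddPart ∧ z ∈ A.oddPart ∧
    LinearIndependent K ![x, y, z] ∧
    Submodule.span K ({x, y, z} : Set A.carrier) = ⊤ ∧
    A.br x y = z ∧ A.br y y = 0 ∧ z ∈ A.center

/-- `A ≅ H(p,q)`: the special Heisenberg Lie superalgebra with even center,
of superdimension `(2p+1 | q)`: even basis `x₁,…,x_{2p}, z` with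
`[xᵢ, x_{p+i}] = z`, odd basis `y₁,…,y_q` with `[yⱼ,yⱼ] = z`, `z` central. -/
def IsHeisEven (A : SuperLie K) (p q : ℕ) : Prop :=
  ∃ (x : Fin (2*p) → A.carrier) (y : Fin q → A.carrier) (z : A.carrier),
    (∀ i, x i ∈ A.evenPart) ∧ (∀ j, y j ∈ A.oddPart) ∧ z ∈ A.evenPart ∧
    LinearIndependent K (Sum.elim x (Sum.elim y (fun _ : Fin 1 => z))) ∧
    Submodule.span K (Set.range (Sum.elim x (Sum.elim y (fun _ : Fin 1 => z)))) = ⊤ ∧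
    (∀ i j : Fin (2*p), A.br (x i) (x j) =
      if (j : ℕ) = (i : ℕ) + p then z else if (i : ℕ) = (j : ℕ) + p then -z else 0) ∧
    (∀ i j : Fin q, A.br (y i) (y j) = if i = j then z else 0) ∧
    (∀ i j, A.br (x i) (y j) = 0) ∧ z ∈ A.center

/-- `A ≅ H_p`: the special Heisenberg Lie superalgebra with odd center, of
superdimension `(p | p+1)`: even basis `x₁,…,x_p`, odd basis `y₁,…,y_p, z`,
with `[xᵢ, yᵢ] = z` and `z` central. -/
def IsHeisOdd (A : SuperLie K) (p : ℕ) : Prop :=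
  ∃ (x : Fin p → A.carrier) (y : Fin p → A.carrier) (z : A.carrier),
    (∀ i, x i ∈ A.evenPart) ∧ (∀ j, y j ∈ A.oddPart) ∧ z ∈ A.oddPart ∧
    LinearIndependent K (Sum.elim x (Sum.elim y (fun _ : Fin 1 => z))) ∧
    Submodule.span K (Set.range (Sum.elim x (Sum.elim y (fun _ : Fin 1 => z)))) = ⊤ ∧
    (∀ i j : Fin p, A.br (x i) (x j) = 0) ∧
    (∀ i j : Fin p, A.br (y i) (y j) = 0) ∧
    (∀ i j : Fin p, A.br (x i) (y j) = if i = j then z else 0) ∧ z ∈ A.center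

/-- `A ≅ H(p,q) ⊕ A(a|b)`: direct sum of the special Heisenberg Lie
superalgebra with even center and an abelian superalgebra of superdimension
`(a|b)` (central basis vectors `u₁,…,u_a` even and `v₁,…,v_b` odd). -/
def IsHeisEvenSum (A : SuperLie K) (p q a b : ℕ) : Prop :=
  ∃ (x : Fin (2*p) → A.carrier) (y : Fin q → A.carrier) (z : A.carrier)
    (u : Fin a → A.carrier) (v : Fin b → A.carrier),
    (∀ i, x i ∈ A.evenPart) ∧ (∀ j, y j ∈ A.oddPart) ∧ z ∈ A.evenPart ∧
    (∀ i, u i ∈ A.evenPart) ∧ (∀ j, v j ∈ A.oddPart) ∧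
    LinearIndependent K
      (Sum.elim x (Sum.elim y (Sum.elim (fun _ : Fin 1 => z) (Sum.elim u v)))) ∧
    Submodule.span K (Set.range
      (Sum.elim x (Sum.elim y (Sum.elim (fun _ : Fin 1 => z) (Sum.elim u v))))) = ⊤ ∧
    (∀ i j : Fin (2*p), A.br (x i) (x j) =
      if (j : ℕ) = (i : ℕ) + p then z else if (i : ℕ) = (j : ℕ) + p then -z else 0) ∧
    (∀ i j : Fin q, A.br (y i) (y j) = if i = j then z else 0) ∧
    (∀ i j, A.br (x i) (y j) = 0) ∧ z ∈ A.center ∧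
    (∀ i, u i ∈ A.center) ∧ (∀ j, v j ∈ A.center)

/-- `A ≅ H_p ⊕ A(a|b)`: direct sum of the special Heisenberg Lie superalgebra
with odd center and an abelian superalgebra of superdimension `(a|b)`. -/
def IsHeisOddSum (A : SuperLie K) (p a b : ℕ) : Prop :=
  ∃ (x : Fin p → A.carrier) (y : Fin p → A.carrier) (z : A.carrier)
    (u : Fin a → A.carrier) (v : Fin b → A.carrier),
    (∀ i, x i ∈ A.evenPart) ∧ (∀ j, y j ∈ A.oddPart) ∧ z ∈ A.oddPart ∧
    (∀ i, u i ∈ A.evenPart) ∧ (∀ j, v j ∈ A.oddPart) ∧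
    LinearIndependent K
      (Sum.elim x (Sum.elim y (Sum.elim (fun _ : Fin 1 => z) (Sum.elim u v)))) ∧
    Submodule.span K (Set.range
      (Sum.elim x (Sum.elim y (Sum.elim (fun _ : Fin 1 => z) (Sum.elim u v))))) = ⊤ ∧
    (∀ i j : Fin p, A.br (x i) (x j) = 0) ∧
    (∀ i j : Fin p, A.br (y i) (y j) = 0) ∧
    (∀ i j : Fin p, A.br (x i) (y j) = if i = j then z else 0) ∧ z ∈ A.center ∧
    (∀ i, u i ∈ A.center) ∧ (∀ j, v j ∈ A.center)

/-- `A ≅ L_{4,0}`: purely even filiform algebra, basis `x,y,z,w`,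
`[x,y] = z`, `[y,z] = w`, all other basis brackets zero. -/
def IsL40 (A : SuperLie K) : Prop :=
  ∃ x y z w : A.carrier,
    x ∈ A.evenPart ∧ y ∈ A.evenPart ∧ z ∈ A.evenPart ∧ w ∈ A.evenPart ∧
    LinearIndependent K ![x, y, z, w] ∧
    Submodule.span K ({x, y, z, w} : Set A.carrier) = ⊤ ∧
    A.br x y = z ∧ A.br y z = w ∧ A.br x z = 0 ∧
    A.br x w = 0 ∧ A.br y w = 0 ∧ A.br z w = 0

/-- `A ≅ L_{5,0}^2`: purely even, basis `x,y,z,v,w`, `[x,y] = v`, `[y,z] = w`,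
with `v, w` central and all other basis brackets zero. -/
def IsL502 (A : SuperLie K) : Prop :=
  ∃ x y z v w : A.carrier,
    x ∈ A.evenPart ∧ y ∈ A.evenPart ∧ z ∈ A.evenPart ∧
    v ∈ A.evenPart ∧ w ∈ A.evenPart ∧
    LinearIndependent K ![x, y, z, v, w] ∧
    Submodule.span K ({x, y, z, v, w} : Set A.carrier) = ⊤ ∧
    A.br x y = v ∧ A.br y z = w ∧ A.br x z = 0 ∧
    v ∈ A.center ∧ w ∈ A.center

end SuperLie

open SuperLie

/-!
The multiplier of `A` has the dimension of the second cohomology `Z²(A) / B²(A)` with trivial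
coefficients. Pulling the bracket of a stem extension back along an even linear section yields a
cocycle, whose scalar components form a subspace of `Z²(A)` isomorphic to the dual of the derived
algebra of the extension; this bounds the kernel. Conversely, as `2` is invertible, `B²(A)` has a
complement `C` in `Z²(A)` that is invariant under the grading involution, and evaluation
`A × A → C*` is an even cocycle which defines a stem extension with kernel `C*`.

For `H(m, n)` the space `B²` is a line. If `m + n ≥ 2`, every basis vector `w` other than `z` is
orthogonal to some pair of basis vectors with non-zero bracket, and the Jacobi identity for the
three gives `f(w, z) = 0` for every cocycle `f`; so cocycles are arbitrary super skew-symmetric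
forms on the span of the `xᵢ` and `yⱼ`. For `H(0, 1)` the Jacobi identity for `y, y, y` reads
`3 f(y, z) = 0`, while on `H(1, 0)` every skew-symmetric form is a cocycle.
-/

namespace SuperLie

variable {K : Type} [Field K] {A B : SuperLie K}

lemma eq_zero_of_eq_neg [NeZero (2 : K)] {V : Type*} [AddCommGroup V] [Module K V] {v : V}
    (h : v = -v) : v = 0 := by
  have h2 : (2 : K) • v = 0 := by rw [two_smul, ← eq_neg_iff_add_eq_zero]; exact h
  exact (smul_eq_zero.mp h2).resolve_left two_ne_zero

section DualComp

variable {V N : Type*} [AddCommGroup V] [Module K V] [AddCommGroup N] [Module K N]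

/-- A linear map out of `Dual K N` that kills exactly the linear forms vanishing on `W` identifies
its range with `Dual K W`. -/
noncomputable def rangeEquivDualOfKerEq (g : Dual K N →ₗ[K] V) (W : Submodule K N)
    (h : LinearMap.ker g = W.dualAnnihilator) : LinearMap.range g ≃ₗ[K] Dual K W :=
  (g.quotKerEquivRange.symm.trans (Submodule.quotEquivOfEq _ _ h)).trans
    (Subspace.quotAnnihilatorEquiv W)

/-- The scalar bilinear forms `φ ∘ c` obtained from a vector-valued one by applying linear forms. -/
def dualComp (c : V →ₗ[K] V →ₗ[K] N) : Dual K N →ₗ[K] LinearMap.BilinForm K V where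
  toFun φ := c.compr₂ φ
  map_add' _ _ := rfl
  map_smul' _ _ := rfl

@[simp] lemma dualComp_apply (c : V →ₗ[K] V →ₗ[K] N) (φ : Dual K N) (x y : V) :
    dualComp c φ x y = φ (c x y) := rfl

lemma ker_dualComp (c : V →ₗ[K] V →ₗ[K] N) :
    LinearMap.ker (dualComp c) = (Submodule.span K {n | ∃ x y, c x y = n}).dualAnnihilator := by
  ext φ
  rw [LinearMap.mem_ker, Submodule.mem_dualAnnihilator]
  refine ⟨fun h n hn => ?_, fun h => ?_⟩
  · refine Submodule.span_le (p := LinearMap.ker φ) |>.mpr ?_ hn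
    rintro _ ⟨x, y, rfl⟩
    exact LinearMap.congr_fun₂ h x y
  · ext x y
    exact h _ (Submodule.subset_span ⟨x, y, rfl⟩)

/-- The scalar forms factoring through `c` are the linear forms on the span of its values. -/
noncomputable def rangeDualCompEquiv (c : V →ₗ[K] V →ₗ[K] N) :
    LinearMap.range (dualComp c) ≃ₗ[K] Dual K (Submodule.span K {n | ∃ x y, c x y = n}) :=
  rangeEquivDualOfKerEq (V := V →ₗ[K] V →ₗ[K] K) (dualComp c) _ (ker_dualComp c)

end DualComp

/-- The Koszul sign `(-1) ^ (a * b)` of a pair of parities, where `true` is the odd parity. -/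
def koszulSign (K : Type) [Field K] (a b : Bool) : K := if a && b then -1 else 1

@[simp] lemma koszulSign_false_left (b : Bool) : koszulSign K false b = 1 := rfl

@[simp] lemma koszulSign_false_right (a : Bool) : koszulSign K a false = 1 := by
  cases a <;> rfl

@[simp] lemma koszulSign_true_true : koszulSign K true true = -1 := rfl

lemma koszulSign_comm (a b : Bool) : koszulSign K a b = koszulSign K b a := by
  cases a <;> cases b <;> rfl

lemma koszulSign_mul_self (a b : Bool) : koszulSign K a b * koszulSign K a b = 1 := by
  cases a <;> cases b <;> simp

lemma koszulSign_ne_zero (a b : Bool) : koszulSign K a b ≠ 0 :=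
  left_ne_zero_of_mul_eq_one (koszulSign_mul_self a b)

/-- `x` is homogeneous of parity `a`, where `false` is even and `true` is odd; this is the form in
which homogeneity enters the Jacobi identity of `SuperLie`. -/
def HasParity (A : SuperLie K) (a : Bool) (x : A.carrier) : Prop :=
  A.J x = if a then -x else x

lemma hasParity_false {x : A.carrier} : A.HasParity false x ↔ A.J x = x := Iff.rfl

lemma hasParity_true {x : A.carrier} : A.HasParity true x ↔ A.J x = -x := Iff.rfl

lemma mem_evenPart {x : A.carrier} : x ∈ A.evenPart ↔ A.HasParity false x := by
  simp [evenPart, hasParity_false, sub_eq_zero]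

lemma mem_oddPart {x : A.carrier} : x ∈ A.oddPart ↔ A.HasParity true x := by
  simp [oddPart, hasParity_true, add_eq_zero_iff_eq_neg]

lemma HasParity.map {s : A.carrier →ₗ[K] B.carrier} (hs : ∀ x, s (A.J x) = B.J (s x)) {a : Bool}
    {x : A.carrier} (hx : A.HasParity a x) : B.HasParity a (s x) := by
  rw [HasParity, ← hs, hx]
  split_ifs <;> simp

lemma exists_hasParity_add_of_mem [NeZero (2 : K)] {p : Submodule K A.carrier}
    (hp : ∀ x ∈ p, A.J x ∈ p) {x : A.carrier} (hx : x ∈ p) :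
    ∃ x₀ ∈ p, ∃ x₁ ∈ p, A.HasParity false x₀ ∧ A.HasParity true x₁ ∧ x₀ + x₁ = x := by
  refine ⟨(2⁻¹ : K) • (x + A.J x), p.smul_mem _ (p.add_mem hx (hp x hx)),
    (2⁻¹ : K) • (x - A.J x), p.smul_mem _ (p.sub_mem hx (hp x hx)), ?_, ?_, ?_⟩
  · rw [hasParity_false, map_smul, map_add, A.J_inv, add_comm]
  · rw [hasParity_true, map_smul, map_sub, A.J_inv, ← smul_neg, neg_sub]
  · rw [← smul_add, add_add_sub_cancel, ← two_smul K x, inv_smul_smul₀ two_ne_zero]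

lemma exists_hasParity_add [NeZero (2 : K)] (x : A.carrier) :
    ∃ x₀ x₁, A.HasParity false x₀ ∧ A.HasParity true x₁ ∧ x₀ + x₁ = x := by
  obtain ⟨x₀, -, x₁, -, h⟩ :=
    exists_hasParity_add_of_mem (p := ⊤) (fun _ _ => trivial) (Submodule.mem_top (x := x))
  exact ⟨x₀, x₁, h⟩

lemma mem_center {z : A.carrier} : z ∈ A.center ↔ ∀ x, A.br z x = 0 := by
  simp [center, Submodule.mem_iInf]

/-! ### Cocycles -/

section Cocycle

variable {N N' : Type*} [AddCommGroup N] [Module K N] [AddCommGroup N'] [Module K N']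
  {c : A.carrier →ₗ[K] A.carrier →ₗ[K] N}

/-- A bilinear map on `A` is super skew-symmetric if it is skew-symmetric up to the Koszul sign
on homogeneous elements; it need not be homogeneous itself. -/
def IsSuperSkew (A : SuperLie K) (c : A.carrier →ₗ[K] A.carrier →ₗ[K] N) : Prop :=
  ∀ ⦃a b : Bool⦄ ⦃x y : A.carrier⦄, A.HasParity a x → A.HasParity b y →
    c x y = -(koszulSign K a b • c y x)

/-- A 2-cocycle of `A` with values in the trivial module `N`; it need not be homogeneous. -/
structure IsCocycle (A : SuperLie K) (c : A.carrier →ₗ[K] A.carrier →ₗ[K] N) : Prop where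
  skew : A.IsSuperSkew c
  jacobi : ∀ ⦃a b d : Bool⦄ ⦃x y z : A.carrier⦄, A.HasParity a x → A.HasParity b y →
    A.HasParity d z →
    koszulSign K a d • c x (A.br y z) + koszulSign K b a • c y (A.br z x)
      + koszulSign K d b • c z (A.br x y) = 0

lemma IsSuperSkew.apply_of_even [NeZero (2 : K)] (hc : A.IsSuperSkew c) {x : A.carrier}
    (hx : A.HasParity false x) (y : A.carrier) : c x y = -c y x := by
  obtain ⟨y₀, y₁, h₀, h₁, rfl⟩ := exists_hasParity_add y
  simp [hc hx h₀, hc hx h₁, add_comm]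

lemma IsSuperSkew.apply_self_of_even [NeZero (2 : K)] (hc : A.IsSuperSkew c) {x : A.carrier}
    (hx : A.HasParity false x) : c x x = 0 :=
  eq_zero_of_eq_neg (K := K) (hc.apply_of_even hx x)

lemma isSuperSkew_br (A : SuperLie K) : A.IsSuperSkew A.br := by
  rintro (_ | _) (_ | _) x y hx hy
  · simpa using A.skew_e x y hx
  · simpa using A.skew_e x y hx
  · simp [A.skew_e y x hy]
  · simpa using A.skew_o x y hx hy

lemma isCocycle_br (A : SuperLie K) : A.IsCocycle A.br where
  skew := A.isSuperSkew_br
  jacobi _ _ _ _ _ _ hx hy hz := A.jacobi _ _ _ _ _ _ hx hy hz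

lemma IsCocycle.compr₂ (hc : A.IsCocycle c) (φ : N →ₗ[K] N') : A.IsCocycle (c.compr₂ φ) where
  skew a b x y hx hy := by simp [hc.skew hx hy]
  jacobi a b d x y z hx hy hz := by
    simpa using congrArg φ (hc.jacobi hx hy hz)

/-- The space `Z²(A)` of scalar 2-cocycles, even and odd ones together. -/
def cocycles (A : SuperLie K) : Submodule K (LinearMap.BilinForm K A.carrier) where
  carrier := {c | A.IsCocycle c}
  zero_mem' := ⟨by simp [IsSuperSkew], by simp⟩
  add_mem' {c d} hc hd :=
    { skew := fun a b x y hx hy => by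
        simp only [LinearMap.add_apply, hc.skew hx hy, hd.skew hx hy, smul_add, neg_add]
      jacobi := fun a b e x y z hx hy hz => by
        simp only [LinearMap.add_apply, smul_eq_mul, mul_add]
        linear_combination hc.jacobi hx hy hz + hd.jacobi hx hy hz }
  smul_mem' r _ hc := hc.compr₂ (LinearMap.lsmul K K r)

/-- The space `B²(A)` of coboundaries, the bilinear forms `φ([·,·])` with `φ` a linear form. -/
def coboundaries (A : SuperLie K) : Submodule K (LinearMap.BilinForm K A.carrier) :=
  LinearMap.range (dualComp A.br)

lemma range_dualComp_le_cocycles (hc : A.IsCocycle c) :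
    LinearMap.range (dualComp c) ≤ A.cocycles := by
  rintro _ ⟨φ, rfl⟩
  exact hc.compr₂ φ

lemma coboundaries_le_cocycles (A : SuperLie K) : A.coboundaries ≤ A.cocycles :=
  range_dualComp_le_cocycles A.isCocycle_br

lemma finrank_coboundaries (A : SuperLie K) :
    finrank K A.coboundaries = finrank K A.derived :=
  (rangeDualCompEquiv A.br).finrank_eq.trans Subspace.dual_finrank_eq

end Cocycle

/-! ### Central extensions -/

section CentralExtension

lemma J_mem_center {z : A.carrier} (hz : z ∈ A.center) : A.J z ∈ A.center := by
  rw [mem_center] at hz ⊢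
  intro x
  rw [← A.J_inv x, ← A.J_br, hz, map_zero]

lemma Hom.map_derived (f : Hom B A) (hf : Surjective f.toLin) :
    B.derived.map f.toLin = A.derived := by
  rw [derived, Submodule.map_span, derived]
  congr 1
  ext a
  constructor
  · rintro ⟨_, ⟨x, y, rfl⟩, rfl⟩
    exact ⟨_, _, (f.map_br x y).symm⟩
  · rintro ⟨x, y, rfl⟩
    obtain ⟨x, rfl⟩ := hf x
    obtain ⟨y, rfl⟩ := hf y
    exact ⟨_, ⟨x, y, rfl⟩, f.map_br x y⟩

variable [NeZero (2 : K)]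

lemma br_right_eq_zero_of_mem_center {z : A.carrier} (hz : z ∈ A.center) (x : A.carrier) :
    A.br x z = 0 := by
  obtain ⟨z₀, hz₀, z₁, hz₁, h₀, h₁, rfl⟩ :=
    exists_hasParity_add_of_mem (fun _ => J_mem_center) hz
  obtain ⟨x₀, x₁, hx₀, hx₁, rfl⟩ := exists_hasParity_add x
  rw [mem_center] at hz₀ hz₁
  simp [A.isSuperSkew_br hx₀ h₀, A.isSuperSkew_br hx₀ h₁, A.isSuperSkew_br hx₁ h₀,
    A.isSuperSkew_br hx₁ h₁, hz₀, hz₁]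

lemma br_eq_br_of_sub_mem_center {x x' y y' : A.carrier} (hx : x - x' ∈ A.center)
    (hy : y - y' ∈ A.center) : A.br x y = A.br x' y' := by
  have hxy : A.br x y = A.br x' y := by
    simpa [sub_eq_zero] using mem_center.mp hx y
  have hxy' : A.br x' y = A.br x' y' := by
    simpa [sub_eq_zero] using br_right_eq_zero_of_mem_center hy x'
  exact hxy.trans hxy'

lemma Hom.exists_even_section (f : Hom B A) (hf : Surjective f.toLin) :
    ∃ s : A.carrier →ₗ[K] B.carrier, (∀ x, f.toLin (s x) = x) ∧ ∀ x, s (A.J x) = B.J (s x) := by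
  obtain ⟨s, hs⟩ := f.toLin.exists_rightInverse_of_surjective (LinearMap.range_eq_top.mpr hf)
  replace hs (x : A.carrier) : f.toLin (s x) = x := LinearMap.congr_fun hs x
  refine ⟨(2⁻¹ : K) • (s + B.J ∘ₗ s ∘ₗ A.J), fun x => ?_, fun x => ?_⟩
  · simp only [LinearMap.smul_apply, LinearMap.add_apply, LinearMap.comp_apply, map_smul, map_add,
      f.map_J, hs, A.J_inv, ← two_smul K x, inv_smul_smul₀ (two_ne_zero (α := K))]
  · simp [A.J_inv, B.J_inv, add_comm]

/-- `s [y, z] - [s y, s z]` is central, so the Jacobi identity of `B` applies. -/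
lemma Hom.isCocycle_br_section (f : Hom B A) (hker : LinearMap.ker f.toLin ≤ B.center)
    {s : A.carrier →ₗ[K] B.carrier} (hfs : ∀ x, f.toLin (s x) = x)
    (hsJ : ∀ x, s (A.J x) = B.J (s x)) : A.IsCocycle (B.br.compl₁₂ s s) where
  skew a b x y hx hy := B.isSuperSkew_br (hx.map hsJ) (hy.map hsJ)
  jacobi a b d x y z hx hy hz := by
    have hs (x y z : A.carrier) : B.br (s x) (s (A.br y z)) = B.br (s x) (B.br (s y) (s z)) :=
      br_eq_br_of_sub_mem_center (by simp) (hker (by simp [f.map_br, hfs]))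
    simpa [hs] using B.isCocycle_br.jacobi (hx.map hsJ) (hy.map hsJ) (hz.map hsJ)

lemma Hom.derived_eq_span_br_section (f : Hom B A) (hker : LinearMap.ker f.toLin ≤ B.center)
    {s : A.carrier →ₗ[K] B.carrier} (hfs : ∀ x, f.toLin (s x) = x) :
    B.derived = Submodule.span K {b | ∃ x y, B.br.compl₁₂ s s x y = b} := by
  have hsub (b : B.carrier) : b - s (f.toLin b) ∈ B.center := hker (by simp [hfs])
  refine le_antisymm (Submodule.span_mono ?_) (Submodule.span_mono ?_)
  · rintro _ ⟨x, y, rfl⟩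
    exact ⟨f.toLin x, f.toLin y, (br_eq_br_of_sub_mem_center (hsub x) (hsub y)).symm⟩
  · rintro _ ⟨x, y, rfl⟩
    exact ⟨s x, s y, rfl⟩

variable [FiniteDimensional K A.carrier]

theorem Hom.finrank_ker_add_finrank_derived_le (f : Hom B A) (hf : Surjective f.toLin)
    (hker : LinearMap.ker f.toLin ≤ B.center ⊓ B.derived) :
    finrank K (LinearMap.ker f.toLin) + finrank K A.derived ≤ finrank K A.cocycles := by
  obtain ⟨hcenter, hderived⟩ := le_inf_iff.mp hker
  obtain ⟨s, hfs, hsJ⟩ := f.exists_even_section hf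
  have hle := range_dualComp_le_cocycles (f.isCocycle_br_section hcenter hfs hsJ)
  let e := rangeDualCompEquiv (B.br.compl₁₂ s s)
  rw [← f.derived_eq_span_br_section hcenter hfs] at e
  have : Module.Finite K (Dual K B.derived) := Module.Finite.equiv e
  have : FiniteDimensional K B.derived := (finite_dual_iff K).mp this
  have hrank := (f.toLin.domRestrict B.derived).finrank_range_add_finrank_ker
  rw [LinearMap.range_domRestrict, f.map_derived hf, LinearMap.ker_domRestrict,
    (Submodule.comapSubtypeEquivOfLe hderived).finrank_eq, add_comm] at hrank
  rw [hrank, ← Subspace.dual_finrank_eq (K := K) (V := B.derived), ← e.finrank_eq]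
  exact Submodule.finrank_mono hle

end CentralExtension

/-! ### The stem cover -/

section CentralExt

variable {N : Type} [AddCommGroup N] [Module K N] {c : A.carrier →ₗ[K] A.carrier →ₗ[K] N}
  {τ : N →ₗ[K] N}

/-- The bracket `[(x, u), (y, v)] = ([x, y], c(x, y))` of the central extension of `A` by `c`. -/
def centralExtBr (c : A.carrier →ₗ[K] A.carrier →ₗ[K] N) :
    A.carrier × N →ₗ[K] A.carrier × N →ₗ[K] A.carrier × N :=
  (A.br.compl₁₂ (.fst K _ N) (.fst K _ N)).compr₂ (.inl K _ _) +
    (c.compl₁₂ (.fst K _ N) (.fst K _ N)).compr₂ (.inr K _ _)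

@[simp] lemma centralExtBr_apply (p q : A.carrier × N) :
    centralExtBr c p q = (A.br p.1 q.1, c p.1 q.1) := by
  simp [centralExtBr]

lemma prodMap_fst_parity {a : Bool} {p : A.carrier × N}
    (hp : A.J.prodMap τ p = if a then -p else p) : A.HasParity a p.1 := by
  have := congrArg Prod.fst hp
  cases a <;> simpa [HasParity] using this

lemma finrank_ker_fst {M : Type*} [AddCommGroup M] [Module K M] :
    finrank K (LinearMap.ker (LinearMap.fst K M N)) = finrank K N := by
  rw [LinearMap.ker_fst]
  exact LinearMap.finrank_range_of_inj LinearMap.inr_injective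

variable [NeZero (2 : K)]

/-- The central extension of `A` by a module `N` with grading involution `τ` that is defined by an
even cocycle with values in `N`. -/
def centralExt (hc : A.IsCocycle c) (hτ : ∀ n, τ (τ n) = n)
    (hcτ : ∀ x y, τ (c x y) = c (A.J x) (A.J y)) : SuperLie K where
  carrier := A.carrier × N
  J := A.J.prodMap τ
  br := centralExtBr c
  J_inv p := by simp [A.J_inv, hτ]
  J_br p q := by simp [A.J_br, hcτ]
  skew_e p q hp := by
    have hp' : A.HasParity false p.1 := prodMap_fst_parity (τ := τ) hp
    simp [A.skew_e _ q.1 hp', hc.skew.apply_of_even hp' q.1]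
  skew_o p q hp hq := by
    have hp' : A.HasParity true p.1 := prodMap_fst_parity (τ := τ) hp
    have hq' : A.HasParity true q.1 := prodMap_fst_parity (τ := τ) hq
    simp [A.skew_o _ _ hp' hq', hc.skew hp' hq']
  jacobi a b d p q r hp hq hr := by
    have hp' := prodMap_fst_parity hp
    have hq' := prodMap_fst_parity hq
    have hr' := prodMap_fst_parity hr
    refine Prod.ext ?_ ?_
    · simpa only [centralExtBr_apply] using! A.jacobi a b d _ _ _ hp' hq' hr'
    · simpa only [centralExtBr_apply] using! hc.jacobi hp' hq' hr'

/-- The projection of a central extension onto `A`. -/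
def centralExtFst (hc : A.IsCocycle c) (hτ : ∀ n, τ (τ n) = n)
    (hcτ : ∀ x y, τ (c x y) = c (A.J x) (A.J y)) : Hom (centralExt hc hτ hcτ) A where
  toLin := .fst K A.carrier N
  map_J _ := rfl
  map_br p q := congrArg Prod.fst (centralExtBr_apply p q)

end CentralExt

/-- The action of the grading involution on bilinear forms; its eigenspaces consist of the even
and of the odd forms. -/
def twist (A : SuperLie K) : Module.End K (LinearMap.BilinForm K A.carrier) where
  toFun c := c.compl₁₂ A.J A.J
  map_add' _ _ := rfl
  map_smul' _ _ := rfl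

@[simp] lemma twist_apply (c : LinearMap.BilinForm K A.carrier) (x y : A.carrier) :
    A.twist c x y = c (A.J x) (A.J y) := rfl

lemma twist_twist (c : LinearMap.BilinForm K A.carrier) : A.twist (A.twist c) = c := by
  ext x y
  simp [A.J_inv]

lemma cocycles_mem_invtSubmodule_twist : A.cocycles ∈ A.twist.invtSubmodule := by
  have hJ {a : Bool} {x : A.carrier} (hx : A.HasParity a x) : A.HasParity a (A.J x) :=
    hx.map (s := A.J) fun _ => rfl
  intro c hc
  exact
    { skew := fun a b x y hx hy => hc.skew (hJ hx) (hJ hy)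
      jacobi := fun a b d x y z hx hy hz => by
        simpa [A.J_br] using hc.jacobi (hJ hx) (hJ hy) (hJ hz) }

lemma coboundaries_mem_invtSubmodule_twist : A.coboundaries ∈ A.twist.invtSubmodule := by
  rintro _ ⟨φ, rfl⟩
  refine ⟨φ ∘ₗ A.J, ?_⟩
  ext x y
  simp [A.J_br]

section Complement

variable [NeZero (2 : K)]

lemma exists_invariant_compl_of_involutive {V : Type*} [AddCommGroup V] [Module K V]
    [FiniteDimensional K V] {τ : Module.End K V} (hτ : ∀ v, τ (τ v) = v) {p q : Submodule K V}
    (hp : p ∈ τ.invtSubmodule) (hq : q ∈ τ.invtSubmodule) (hpq : p ≤ q) :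
    ∃ r ≤ q, r ∈ τ.invtSubmodule ∧ Disjoint p r ∧ p ⊔ r = q := by
  have hsep : (Polynomial.X ^ 2 - Polynomial.C (1 : K)).Separable :=
    Polynomial.separable_X_pow_sub_C 1 (by exact_mod_cast two_ne_zero) one_ne_zero
  have hss : Module.End.IsSemisimple (τ.restrict hq) := by
    refine Module.End.isSemisimple_of_squarefree_aeval_eq_zero hsep.squarefree ?_
    ext1 v
    simpa [pow_two, sub_eq_zero] using! Subtype.ext (hτ v)
  exact (Module.End.isSemisimple_restrict_iff q hq).mp hss p hp hpq

lemma exists_invariant_compl_coboundaries (A : SuperLie K) [FiniteDimensional K A.carrier] :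
    ∃ C ≤ A.cocycles, C ∈ A.twist.invtSubmodule ∧
    Disjoint A.coboundaries C ∧ A.coboundaries ⊔ C = A.cocycles :=
  exists_invariant_compl_of_involutive (V := LinearMap.BilinForm K A.carrier) twist_twist
    coboundaries_mem_invtSubmodule_twist cocycles_mem_invtSubmodule_twist A.coboundaries_le_cocycles

end Complement

section EvalForm

-- Instance search gets stuck on the iterated `→ₗ` here.
noncomputable instance (C : Submodule K (LinearMap.BilinForm K A.carrier)) : AddCommGroup C :=
  Submodule.addCommGroup (M := LinearMap.BilinForm K A.carrier) C

variable {C : Submodule K (LinearMap.BilinForm K A.carrier)}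

/-- The bilinear map `(x, y) ↦ (f ↦ f(x, y))` attached to a space `C` of bilinear forms. -/
def evalForm (C : Submodule K (LinearMap.BilinForm K A.carrier)) :
    A.carrier →ₗ[K] A.carrier →ₗ[K] Dual K C :=
  LinearMap.mk₂ K (fun x y =>
      { toFun := fun f => (f : LinearMap.BilinForm K A.carrier) x y
        map_add' := fun _ _ => rfl
        map_smul' := fun _ _ => rfl })
    (fun _ _ _ => by ext; simp) (fun _ _ _ => by ext; simp)
    (fun _ _ _ => by ext; simp) (fun _ _ _ => by ext; simp)

@[simp] lemma evalForm_apply (x y : A.carrier) (f : C) :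
    evalForm C x y f = (f : LinearMap.BilinForm K A.carrier) x y := rfl

lemma isCocycle_evalForm (hC : C ≤ A.cocycles) : A.IsCocycle (evalForm C) where
  skew a b x y hx hy := by
    ext f
    simpa using (hC f.2).skew hx hy
  jacobi a b d x y z hx hy hz := by
    ext f
    simpa using (hC f.2).jacobi hx hy hz

variable [FiniteDimensional K C]

/-- A linear form on the extension by `evalForm C` that vanishes on brackets restricts to the
evaluation at an element of `C` which is a coboundary. -/
lemma mk_zero_mem_span_centralExtBr (hC : Disjoint A.coboundaries C) (n : Dual K C) :
    ((0, n) : A.carrier × Dual K C) ∈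
      Submodule.span K {z | ∃ p q, centralExtBr (evalForm C) p q = z} := by
  by_contra hn
  obtain ⟨ψ, hψn, hψ⟩ := Submodule.exists_le_ker_of_notMem hn
  obtain ⟨f, hf⟩ := (Module.evalEquiv K C).surjective (ψ ∘ₗ .inr K _ _)
  replace hf (n : Dual K C) : n f = ψ (0, n) := LinearMap.congr_fun hf n
  have hfcob : (f : LinearMap.BilinForm K A.carrier) ∈ A.coboundaries := by
    refine ⟨-(ψ ∘ₗ .inl K _ _), ?_⟩
    ext x y
    have hxy : ψ (A.br x y, evalForm C x y) = 0 :=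
      hψ (Submodule.subset_span ⟨(x, 0), (y, 0), by simp⟩)
    have hsplit : (A.br x y, evalForm C x y) = (A.br x y, 0) + (0, evalForm C x y) := by simp
    rw [hsplit, map_add, ← hf] at hxy
    simpa [neg_eq_iff_add_eq_zero] using hxy
  have hf0 : f = 0 := Subtype.ext (Submodule.disjoint_def.mp hC _ hfcob f.2)
  exact hψn (by rw [← hf, hf0, map_zero])

theorem exists_stem_extension [NeZero (2 : K)] (hCZ : C ≤ A.cocycles)
    (hCτ : C ∈ A.twist.invtSubmodule) (hC : Disjoint A.coboundaries C) :
    ∃ (B : SuperLie K) (f : Hom B A), Surjective f.toLin ∧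
      LinearMap.ker f.toLin ≤ B.center ⊓ B.derived ∧
      finrank K (LinearMap.ker f.toLin) = finrank K C := by
  let τ : Dual K C →ₗ[K] Dual K C := (A.twist.restrict hCτ).dualMap
  have hτ (n : Dual K C) : τ (τ n) = n := by
    ext f
    exact congrArg n (Subtype.ext (twist_twist _))
  refine ⟨_, centralExtFst (τ := τ) (isCocycle_evalForm hCZ) hτ fun x y => rfl,
    Prod.fst_surjective, le_inf ?_ ?_, ?_⟩
  · rintro ⟨x, n⟩ (rfl : x = 0)
    exact mem_center.mpr fun q => (centralExtBr_apply _ q).trans (by simp; rfl)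
  · rintro ⟨x, n⟩ (rfl : x = 0)
    exact mk_zero_mem_span_centralExtBr hC n
  · exact finrank_ker_fst.trans Subspace.dual_finrank_eq

end EvalForm

theorem multDim_add_finrank_derived [NeZero (2 : K)] (A : SuperLie K)
    [FiniteDimensional K A.carrier] :
    A.multDim + finrank K A.derived = finrank K A.cocycles := by
  obtain ⟨C, hCZ, hCτ, hdisj, hsup⟩ := A.exists_invariant_compl_coboundaries
  have hrank := Submodule.finrank_sup_add_finrank_inf_eq (V := LinearMap.BilinForm K A.carrier)
    A.coboundaries C
  rw [hsup, hdisj.eq_bot, finrank_bot, add_zero, finrank_coboundaries] at hrank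
  have : FiniteDimensional K C :=
    FiniteDimensional.finiteDimensional_submodule (V := LinearMap.BilinForm K A.carrier) C
  have hmult : A.multDim = finrank K C := by
    refine IsGreatest.csSup_eq ⟨exists_stem_extension hCZ hCτ hdisj, ?_⟩
    rintro _ ⟨B, f, hf, hker, rfl⟩
    have := f.finrank_ker_add_finrank_derived_le hf hker
    lia
  rw [hmult, hrank, add_comm]

/-! ### Super skew-symmetric matrices -/

section SuperSkew

variable {ι : Type*} {par : ι → Bool}

/-- The matrices that are skew-symmetric up to the Koszul sign of the parities of the indices: the
coordinates of super skew-symmetric bilinear forms. -/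
def superSkew (K : Type) [Field K] (par : ι → Bool) : Submodule K (Matrix ι ι K) where
  carrier := {w | ∀ i j, w i j = -(koszulSign K (par i) (par j) * w j i)}
  zero_mem' := by simp
  add_mem' {v w} hv hw i j := by
    rw [Matrix.add_apply, Matrix.add_apply, hv, hw]
    ring
  smul_mem' r w hw i j := by
    rw [Matrix.smul_apply, Matrix.smul_apply, hw, smul_eq_mul, smul_eq_mul]
    ring

lemma mem_superSkew {w : Matrix ι ι K} :
    w ∈ superSkew K par ↔ ∀ i j, w i j = -(koszulSign K (par i) (par j) * w j i) := Iff.rfl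

variable [LinearOrder ι]

/-- The positions of the entries that determine a super skew-symmetric matrix freely: those above
the diagonal, and the diagonal ones of odd index. -/
abbrev SuperSkewIndex (par : ι → Bool) : Type _ :=
  {p : ι × ι // p.1 < p.2 ∨ p.1 = p.2 ∧ par p.1 = true}

lemma two_mul_card_superSkewIndex_add [Fintype ι] (par : ι → Bool) :
    2 * Fintype.card (SuperSkewIndex par) + Fintype.card ι =
      Fintype.card ι ^ 2 + 2 * Fintype.card {i // par i = true} := by
  have hpos (i j : ι) :
      (if i < j ∨ i = j ∧ par i = true then 1 else 0)
        + (if j < i ∨ j = i ∧ par j = true then 1 else 0) + (if i = j then 1 else 0)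
      = 1 + 2 * if i = j then (if par i = true then 1 else 0) else 0 := by
    rcases lt_trichotomy i j with h | rfl | h
    · simp [h, h.ne, h.ne', h.not_gt]
    · cases par i <;> simp
    · simp [h, h.ne, h.ne', h.not_gt]
  have hsum := Finset.sum_congr rfl fun i (_ : i ∈ Finset.univ) =>
    Finset.sum_congr rfl fun j (_ : j ∈ Finset.univ) => hpos i j
  simp only [Finset.sum_add_distrib, ← Finset.mul_sum] at hsum
  rw [Finset.sum_comm (f := fun i j => if j < i ∨ j = i ∧ par j = true then 1 else 0)] at hsum
  simp only [Finset.sum_ite_eq, Finset.mem_univ, if_true, Finset.sum_const, Finset.card_univ,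
    smul_eq_mul, mul_one] at hsum
  simp only [Fintype.card_subtype, Finset.card_filter, Fintype.sum_prod_type, sq]
  lia

/-- The super skew-symmetric matrix with prescribed entries at the determining positions. -/
def ofSuperSkewIndex (u : SuperSkewIndex par → K) : Matrix ι ι K := fun i j =>
  if h : i < j ∨ i = j ∧ par i = true then u ⟨(i, j), h⟩
  else if h : j < i then -(koszulSign K (par i) (par j) * u ⟨(j, i), .inl h⟩) else 0

lemma ofSuperSkewIndex_mem (u : SuperSkewIndex par → K) :
    ofSuperSkewIndex u ∈ superSkew K par := by
  intro i j
  rcases lt_trichotomy i j with h | rfl | h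
  · simp [ofSuperSkewIndex, h, h.ne', h.not_gt, ← mul_assoc, koszulSign_comm (par j),
      koszulSign_mul_self]
  · cases hi : par i <;> simp [ofSuperSkewIndex, hi]
  · simp [ofSuperSkewIndex, h, h.ne', h.not_gt]

/-- A super skew-symmetric matrix amounts to its entries at the determining positions. -/
def superSkewEquiv [NeZero (2 : K)] (par : ι → Bool) :
    superSkew K par ≃ₗ[K] (SuperSkewIndex par → K) where
  toFun w p := w.1 p.1.1 p.1.2
  map_add' _ _ := rfl
  map_smul' _ _ := rfl
  invFun u := ⟨ofSuperSkewIndex u, ofSuperSkewIndex_mem u⟩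
  left_inv := by
    rintro ⟨w, hw⟩
    ext i j
    rcases lt_trichotomy i j with h | rfl | h
    · simp [ofSuperSkewIndex, h]
    · cases hi : par i with
      | true => simp [ofSuperSkewIndex, hi]
      | false =>
        have hwi : w i i = 0 := eq_zero_of_eq_neg (K := K) (by simpa [hi] using hw i i)
        simp [ofSuperSkewIndex, hi, hwi]
    · simp [ofSuperSkewIndex, h, h.ne', h.not_gt, ← hw i j]
  right_inv u := by
    ext p
    simp [ofSuperSkewIndex, p.2]

end SuperSkew

lemma two_mul_finrank_superSkew_add [NeZero (2 : K)] {ι : Type*} [Fintype ι] (par : ι → Bool) :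
    2 * finrank K (superSkew K par) + Fintype.card ι =
      Fintype.card ι ^ 2 + 2 * Fintype.card {i // par i = true} := by
  let : LinearOrder ι := LinearOrder.lift' _ (Fintype.equivFin ι).injective
  rw [(superSkewEquiv par).finrank_eq, finrank_fintype_fun_eq_card]
  exact two_mul_card_superSkewIndex_add par

section HomogeneousBasis

variable {ι N : Type*} [AddCommGroup N] [Module K N]
  {e : Basis ι K A.carrier} {par : ι → Bool}

lemma repr_eq_zero_of_hasParity [NeZero (2 : K)] (he : ∀ i, A.HasParity (par i) (e i)) {a : Bool}
    {x : A.carrier} (hx : A.HasParity a x) {i : ι} (hi : par i ≠ a) : e.repr x i = 0 := by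
  have hJ : e.coord i ∘ₗ A.J = koszulSign K (par i) true • e.coord i := by
    refine e.ext fun j => ?_
    rw [LinearMap.comp_apply, he j]
    obtain rfl | hji := eq_or_ne j i
    · cases par j <;> simp
    · cases par j <;> simp [hji]
  have hxi := LinearMap.congr_fun hJ x
  rw [LinearMap.comp_apply, hx] at hxi
  refine eq_zero_of_eq_neg (K := K) ?_
  cases a <;> simp only [ne_eq, Bool.not_eq_true, Bool.not_eq_false] at hi <;>
    simpa [hi, eq_comm] using hxi

lemma mem_span_of_hasParity [NeZero (2 : K)] (he : ∀ i, A.HasParity (par i) (e i)) {a : Bool}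
    {x : A.carrier} (hx : A.HasParity a x) : x ∈ Submodule.span K (e '' {i | par i = a}) := by
  rw [e.mem_span_image]
  intro i hi
  by_contra hia
  exact Finsupp.mem_support_iff.mp hi (repr_eq_zero_of_hasParity he hx hia)

lemma isSuperSkew_iff_basis [NeZero (2 : K)] (he : ∀ i, A.HasParity (par i) (e i))
    {c : A.carrier →ₗ[K] A.carrier →ₗ[K] N} :
    A.IsSuperSkew c ↔
      ∀ i j, c (e i) (e j) = -(koszulSign K (par i) (par j) • c (e j) (e i)) := by
  refine ⟨fun h i j => h (he i) (he j), fun h a b x y hx hy => ?_⟩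
  replace hx := mem_span_of_hasParity he hx
  replace hy := mem_span_of_hasParity he hy
  induction hx, hy using Submodule.span_induction₂ with
  | mem_mem x y hx hy =>
    obtain ⟨i, rfl, rfl⟩ := hx
    obtain ⟨j, rfl, rfl⟩ := hy
    exact h i j
  | zero_left | zero_right => simp
  | add_left _ _ _ _ _ _ h₁ h₂ | add_right _ _ _ _ _ _ h₁ h₂ => simp [h₁, h₂, add_comm]
  | smul_left _ _ _ _ _ h | smul_right _ _ _ _ _ h => 
    simp [h, smul_comm (koszulSign K a b)]

lemma isSuperSkew_toLinearMap₂_iff [NeZero (2 : K)] [Fintype ι] [DecidableEq ι]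
    (he : ∀ i, A.HasParity (par i) (e i)) {w : Matrix ι ι K} :
    A.IsSuperSkew (Matrix.toLinearMap₂ e e w) ↔ w ∈ superSkew K par := by
  simp only [isSuperSkew_iff_basis he, Matrix.toLinearMap₂_apply_basis, smul_eq_mul, mem_superSkew]

lemma finrank_cocycles_of_isSuperSkew [NeZero (2 : K)] [Finite ι]
    (he : ∀ i, A.HasParity (par i) (e i))
    (h : ∀ c : LinearMap.BilinForm K A.carrier, A.IsSuperSkew c → A.IsCocycle c) :
    finrank K A.cocycles = finrank K (superSkew K par) := by
  classical
  have := Fintype.ofFinite ι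
  have hcomap : superSkew K par = A.cocycles.comap (Matrix.toLinearMap₂ e e).toLinearMap := by
    ext w
    rw [← isSuperSkew_toLinearMap₂_iff he]
    exact ⟨h _, IsCocycle.skew⟩
  rw [hcomap]
  exact ((Matrix.toLinearMap₂ e e).ofSubmodule' A.cocycles).finrank_eq.symm

end HomogeneousBasis

/-! ### Heisenberg superalgebras -/

/-- A homogeneous basis of `A` consisting of vectors `xᵢ` of parity `par i` and of an even central
vector `z` such that `[xᵢ, xⱼ] = ω i j • z`. -/
structure HeisenbergBasis (A : SuperLie K) {ι : Type*} (par : ι → Bool) (ω : Matrix ι ι K) where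
  basis : Basis (ι ⊕ Fin 1) K A.carrier
  hasParity_inl : ∀ i, A.HasParity (par i) (basis (.inl i))
  hasParity_inr : A.HasParity false (basis (.inr 0))
  br_inl_inl : ∀ i j, A.br (basis (.inl i)) (basis (.inl j)) = ω i j • basis (.inr 0)
  inr_mem_center : basis (.inr 0) ∈ A.center

namespace HeisenbergBasis

variable {ι : Type*} {par : ι → Bool} {ω : Matrix ι ι K}
  (E : HeisenbergBasis A par ω)

include E

lemma hasParity (i : ι ⊕ Fin 1) :
    A.HasParity (Sum.elim par (fun _ => false) i) (E.basis i) := by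
  rcases i with i | i
  · exact E.hasParity_inl i
  · rw [Subsingleton.elim i 0]
    exact E.hasParity_inr

lemma apply_inr_eq_zero {f : LinearMap.BilinForm K A.carrier} (hf : A.IsCocycle f) {i j k : ι}
    (hij : ω i j ≠ 0) (hjk : ω j k = 0) (hki : ω k i = 0) :
    f (E.basis (.inl k)) (E.basis (.inr 0)) = 0 := by
  have hjac := hf.jacobi (E.hasParity_inl k) (E.hasParity_inl i) (E.hasParity_inl j)
  simpa [E.br_inl_inl, hjk, hki, hij, koszulSign_ne_zero] using hjac

lemma apply_inr_eq_zero_of_odd (h3 : (3 : K) ≠ 0) {f : LinearMap.BilinForm K A.carrier}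
    (hf : A.IsCocycle f) {k : ι} (hk : par k = true) (hkk : ω k k ≠ 0) :
    f (E.basis (.inl k)) (E.basis (.inr 0)) = 0 := by
  have hjac := hf.jacobi (E.hasParity_inl k) (E.hasParity_inl k) (E.hasParity_inl k)
  simp only [hk, koszulSign_true_true, E.br_inl_inl, map_smul, smul_eq_mul] at hjac
  have h3ω : 3 * ω k k * f (E.basis (.inl k)) (E.basis (.inr 0)) = 0 := by
    linear_combination -hjac
  exact (mul_eq_zero.mp h3ω).resolve_left (mul_ne_zero h3 hkk)

variable [NeZero (2 : K)]

lemma br_inl_inr (i : ι) : A.br (E.basis (.inl i)) (E.basis (.inr 0)) = 0 :=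
  br_right_eq_zero_of_mem_center E.inr_mem_center _

lemma br_mem_span (x y : A.carrier) : A.br x y ∈ Submodule.span K {E.basis (.inr 0)} := by
  have hquot : A.br.compr₂ (Submodule.span K {E.basis (.inr 0)}).mkQ = 0 := by
    refine E.basis.ext fun i => E.basis.ext fun j => ?_
    rw [LinearMap.compr₂_apply, Submodule.mkQ_apply]
    refine (Submodule.Quotient.mk_eq_zero _).mpr ?_
    rcases i with i | i <;> rcases j with j | j
    · rw [E.br_inl_inl]
      exact Submodule.smul_mem _ _ (Submodule.mem_span_singleton_self _)
    · simp [Subsingleton.elim j 0, E.br_inl_inr]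
    all_goals simp [Subsingleton.elim i 0, mem_center.mp E.inr_mem_center]
  exact (Submodule.Quotient.mk_eq_zero _).mp (LinearMap.congr_fun₂ hquot x y)

lemma finrank_derived (hω : ω ≠ 0) : finrank K A.derived = 1 := by
  obtain ⟨i, j, hij⟩ : ∃ i j, ω i j ≠ 0 := by
    by_contra! h
    exact hω (Matrix.ext h)
  have hderived : A.derived = Submodule.span K {E.basis (.inr 0)} := by
    refine le_antisymm (Submodule.span_le.mpr ?_) ?_
    · rintro _ ⟨x, y, rfl⟩
      exact E.br_mem_span x y
    · rw [Submodule.span_singleton_le_iff_mem, ← inv_smul_smul₀ hij (E.basis (.inr 0)),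
        ← E.br_inl_inl]
      exact Submodule.smul_mem _ _ (Submodule.subset_span ⟨_, _, rfl⟩)
  rw [hderived, finrank_span_singleton (E.basis.ne_zero _)]

lemma isCocycle_of_apply_inr {f : LinearMap.BilinForm K A.carrier} (hf : A.IsSuperSkew f)
    (hfz : ∀ x, f x (E.basis (.inr 0)) = 0) : A.IsCocycle f where
  skew := hf
  jacobi a b d x y z _ _ _ := by
    have hbr (x y z : A.carrier) : f x (A.br y z) = 0 := by
      obtain ⟨r, hr⟩ := Submodule.mem_span_singleton.mp (E.br_mem_span y z)
      rw [← hr, map_smul, hfz, smul_zero]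
    simp [hbr]

variable [Fintype ι]

lemma isCocycle_toLinearMap₂_fromBlocks [DecidableEq ι] {w : Matrix ι ι K}
    (hw : w ∈ superSkew K par) :
    A.IsCocycle (N := K) (Matrix.toLinearMap₂ E.basis E.basis (.fromBlocks w 0 0 0)) := by
  refine E.isCocycle_of_apply_inr ((isSuperSkew_toLinearMap₂_iff E.hasParity).mpr ?_) fun x => ?_
  · rintro (i | i) (j | j)
    · exact hw i j
    all_goals simp
  · have hz : (Matrix.toLinearMap₂ E.basis E.basis (.fromBlocks w 0 0 0)).flip
        (E.basis (.inr 0)) = 0 := by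
      refine E.basis.ext fun i => ?_
      rw [LinearMap.flip_apply, Matrix.toLinearMap₂_apply_basis]
      cases i <;> rfl
    exact LinearMap.congr_fun hz x

/-- If every cocycle vanishes on the pairs `(xₖ, z)`, then the cocycles are the super
skew-symmetric forms in the coordinates `xᵢ`. -/
noncomputable def cocyclesEquiv [DecidableEq ι] (h : ∀ f ∈ A.cocycles, ∀ k,
    f (E.basis (.inl k)) (E.basis (.inr 0)) = 0) : A.cocycles ≃ₗ[K] superSkew K par where
  toFun f := ⟨.of fun i j => f.1 (E.basis (.inl i)) (E.basis (.inl j)),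
    fun i j => f.2.skew (E.hasParity_inl i) (E.hasParity_inl j)⟩
  map_add' _ _ := rfl
  map_smul' _ _ := rfl
  invFun w := ⟨Matrix.toLinearMap₂ E.basis E.basis (.fromBlocks w.1 0 0 0),
    E.isCocycle_toLinearMap₂_fromBlocks w.2⟩
  left_inv := by
    rintro ⟨f, hf⟩
    refine Subtype.ext (E.basis.ext fun i => E.basis.ext fun j => ?_)
    rw [Matrix.toLinearMap₂_apply_basis]
    rcases i with i | i <;> rcases j with j | j
    · rfl
    · simp [Subsingleton.elim j 0, h f hf]
    · simp [Subsingleton.elim i 0, hf.skew.apply_of_even E.hasParity_inr, h f hf]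
    · simp [Subsingleton.elim i 0, Subsingleton.elim j 0,
        hf.skew.apply_self_of_even E.hasParity_inr]
  right_inv w := by
    ext i j
    exact Matrix.toLinearMap₂_apply_basis E.basis E.basis _ _ _

theorem two_mul_multDim_add [FiniteDimensional K A.carrier] (hω : ω ≠ 0)
    (h : ∀ f ∈ A.cocycles, ∀ k, f (E.basis (.inl k)) (E.basis (.inr 0)) = 0) :
    2 * (A.multDim + 1) + Fintype.card ι =
      Fintype.card ι ^ 2 + 2 * Fintype.card {i // par i = true} := by
  classical
  rw [← E.finrank_derived hω, multDim_add_finrank_derived, (E.cocyclesEquiv h).finrank_eq,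
    two_mul_finrank_superSkew_add]

end HeisenbergBasis

namespace HeisenbergBasis

/-- Renaming the index set of a Heisenberg basis. -/
noncomputable def reindex {ι ι' : Type*} {par : ι → Bool} {ω : Matrix ι ι K}
    (E : HeisenbergBasis A par ω) (e : ι' ≃ ι) :
    HeisenbergBasis A (par ∘ e) (ω.submatrix e e) where
  basis := E.basis.reindex (e.symm.sumCongr (.refl _))
  hasParity_inl i := by simpa using E.hasParity_inl (e i)
  hasParity_inr := by simpa using E.hasParity_inr
  br_inl_inl i j := by simpa using E.br_inl_inl (e i) (e j)
  inr_mem_center := by simpa using E.inr_mem_center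

section TwoEvenGenerators

variable {ω : Matrix (Fin 2) (Fin 2) K}
  (E : HeisenbergBasis A (fun _ => false) ω)

include E

lemma hasParity_false_of_even (x : A.carrier) : A.HasParity false x := by
  refine LinearMap.congr_fun (g := LinearMap.id) (E.basis.ext fun i => ?_) x
  simpa [HasParity] using E.hasParity i

variable [NeZero (2 : K)]

lemma koszulSign_smul_of_even {a : Bool} {x : A.carrier} (hx : A.HasParity a x) (b : Bool)
    (f : LinearMap.BilinForm K A.carrier) (y : A.carrier) :
    koszulSign K a b • f x y = f x y := by
  cases a with
  | false => simp
  | true =>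
    have hx0 : x = 0 := eq_zero_of_eq_neg (K := K) ((E.hasParity_false_of_even x).symm.trans hx)
    simp [hx0]

lemma isCocycle_of_isSuperSkew {f : LinearMap.BilinForm K A.carrier} (hf : A.IsSuperSkew f) :
    A.IsCocycle f where
  skew := hf
  jacobi a b d x y w hx hy hw := by
    rw [E.koszulSign_smul_of_even hx, E.koszulSign_smul_of_even hy, E.koszulSign_smul_of_even hw]
    have heven := E.hasParity_false_of_even
    have hbr_self (x : A.carrier) : A.br x x = 0 := A.isSuperSkew_br.apply_self_of_even (heven x)
    have hbr_swap := A.skew_e _ (E.basis (.inl 0)) (heven (E.basis (.inl 1)))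
    have hbr_inr := mem_center.mp E.inr_mem_center
    have hf_inr : f (E.basis (.inr 0)) (E.basis (.inr 0)) = 0 := hf.apply_self_of_even (heven _)
    rw [← E.basis.sum_repr x, ← E.basis.sum_repr y, ← E.basis.sum_repr w]
    simp only [Fintype.sum_sum_type, Fin.sum_univ_two, Fin.sum_univ_one, map_add, map_smul,
      map_neg, LinearMap.add_apply, LinearMap.smul_apply, hbr_self, hbr_swap, E.br_inl_inl,
      hbr_inr, E.br_inl_inr, hf_inr, map_zero, smul_zero, smul_eq_mul]
    ring

theorem multDim_eq_two [FiniteDimensional K A.carrier] (hω : ω ≠ 0) : A.multDim = 2 := by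
  have hrank := multDim_add_finrank_derived A
  have hskew := two_mul_finrank_superSkew_add (K := K)
    (Sum.elim (fun _ : Fin 2 => false) (fun _ : Fin 1 => false))
  rw [E.finrank_derived hω,
    finrank_cocycles_of_isSuperSkew E.hasParity fun _ => E.isCocycle_of_isSuperSkew] at hrank
  have hodd :
      Fintype.card {i // Sum.elim (fun _ : Fin 2 => false) (fun _ : Fin 1 => false) i} = 0 := by
    decide
  rw [hodd, Fintype.card_sum, Fintype.card_fin, Fintype.card_fin] at hskew
  lia

end TwoEvenGenerators

end HeisenbergBasis

section HeisEven

variable {m n : ℕ}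

/-- The coefficients of the bracket of `H(m, n)` in its standard basis. -/
def heisForm (K : Type) [Field K] (m n : ℕ) :
    Matrix (Fin (2 * m) ⊕ Fin n) (Fin (2 * m) ⊕ Fin n) K :=
  .fromBlocks
    (.of fun i j => if (j : ℕ) = (i : ℕ) + m then 1 else if (i : ℕ) = (j : ℕ) + m then -1 else 0)
    0 0 1

lemma IsHeisEven.nonempty_heisenbergBasis [NeZero (2 : K)] (h : A.IsHeisEven m n) :
    Nonempty (HeisenbergBasis A Sum.isRight (heisForm K m n)) := by
  obtain ⟨x, y, z, hx, hy, hz, hli, hspan, hxx, hyy, hxy, hcenter⟩ := h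
  let b := (Basis.mk hli hspan.ge).reindex (Equiv.sumAssoc _ _ _).symm
  have hbx (i : Fin (2 * m)) : b (.inl (.inl i)) = x i := by simp [b]
  have hby (j : Fin n) : b (.inl (.inr j)) = y j := by simp [b]
  have hbz : b (.inr 0) = z := by simp [b]
  refine ⟨⟨b, ?_, ?_, ?_, ?_⟩⟩
  · rintro (i | j)
    · exact hbx i ▸ mem_evenPart.mp (hx i)
    · exact hby j ▸ mem_oddPart.mp (hy j)
  · exact hbz ▸ mem_evenPart.mp hz
  · rintro (i | i) (j | j) <;> simp only [hbx, hby, hbz]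
    · rw [hxx]
      simp [heisForm, ite_smul]
    · simp [heisForm, hxy]
    · simp [heisForm, A.isSuperSkew_br (mem_oddPart.mp (hy i)) (mem_evenPart.mp (hx j)), hxy]
    · rw [hyy]
      simp [heisForm, Matrix.one_apply]
  · exact hbz ▸ hcenter

/-- The orthogonal block of a standard basis vector of `H(m, n)`: the hyperbolic plane spanned by
`xᵢ` and `x_{m+i}`, or the line spanned by `yⱼ`. -/
def heisBlock : Fin (2 * m) ⊕ Fin n → Fin m ⊕ Fin n := Sum.map Fin.modNat id

lemma heisForm_eq_zero_of_heisBlock_ne {i j : Fin (2 * m) ⊕ Fin n}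
    (h : heisBlock i ≠ heisBlock j) : heisForm K m n i j = 0 := by
  rcases i with i | i <;> rcases j with j | j
  · have hmod : (i : ℕ) % m ≠ j % m := by simpa [heisBlock, Fin.ext_iff] using h
    have hij : (j : ℕ) ≠ i + m := fun hij => hmod (by simp [hij])
    have hji : (i : ℕ) ≠ j + m := fun hji => hmod (by simp [hji])
    simp [heisForm, hij, hji]
  · rfl
  · rfl
  · exact Matrix.one_apply_ne (by simpa [heisBlock] using h)

lemma exists_heisForm_ne_zero (b : Fin m ⊕ Fin n) :
    ∃ i j, heisBlock i = b ∧ heisBlock j = b ∧ heisForm K m n i j ≠ 0 := by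
  rcases b with b | b
  · refine ⟨.inl ⟨b, by lia⟩, .inl ⟨b + m, by lia⟩, ?_, ?_, ?_⟩
    · simp [heisBlock, Fin.ext_iff, Nat.mod_eq_of_lt]
    · simp [heisBlock, Fin.ext_iff, Nat.mod_eq_of_lt]
    · simp [heisForm]
  · exact ⟨.inr b, .inr b, rfl, rfl, by simp [heisForm]⟩

lemma heisForm_ne_zero (h : 0 < m + n) : heisForm K m n ≠ 0 := by
  have : Nonempty (Fin m ⊕ Fin n) := Fintype.card_pos_iff.mp (by simpa using h)
  obtain ⟨i, j, -, -, hij⟩ := exists_heisForm_ne_zero (K := K) (Classical.arbitrary (Fin m ⊕ Fin n))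
  exact fun h0 => hij (by rw [h0, Matrix.zero_apply])

lemma exists_heisForm_ne_zero_orthogonal (h : 2 ≤ m + n) (k : Fin (2 * m) ⊕ Fin n) :
    ∃ i j, heisForm K m n i j ≠ 0 ∧ heisForm K m n j k = 0 ∧ heisForm K m n k i = 0 := by
  have : Nontrivial (Fin m ⊕ Fin n) := Fintype.one_lt_card_iff_nontrivial.mp <| by
    rwa [Fintype.card_sum, Fintype.card_fin, Fintype.card_fin]
  obtain ⟨b, hb⟩ := exists_ne (heisBlock k)
  obtain ⟨i, j, rfl, hj, hij⟩ := exists_heisForm_ne_zero (K := K) b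
  exact ⟨i, j, hij, heisForm_eq_zero_of_heisBlock_ne (hj ▸ hb),
    heisForm_eq_zero_of_heisBlock_ne hb.symm⟩

lemma card_isRight {α β : Type*} [Fintype α] [Fintype β] :
    Fintype.card {i : α ⊕ β // i.isRight = true} = Fintype.card β := by
  rw [Fintype.card_subtype, Finset.card_filter, Fintype.sum_sum_type]
  simp

variable [NeZero (2 : K)] [FiniteDimensional K A.carrier]

lemma HeisenbergBasis.two_mul_multDim_heisForm (E : HeisenbergBasis A Sum.isRight (heisForm K m n))
    (hmn : 0 < m + n)
    (h : ∀ f ∈ A.cocycles, ∀ k, f (E.basis (.inl k)) (E.basis (.inr 0)) = 0) :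
    2 * (A.multDim : ℤ) = 4 * m ^ 2 - 2 * m - 2 + 4 * m * n + n * (n + 1) := by
  have hdim := E.two_mul_multDim_add (heisForm_ne_zero hmn) h
  rw [card_isRight, Fintype.card_sum, Fintype.card_fin, Fintype.card_fin] at hdim
  zify at hdim
  linear_combination hdim

theorem IsHeisEven.two_mul_multDim (h : A.IsHeisEven m n) (hmn : 2 ≤ m + n) :
    2 * (A.multDim : ℤ) = 4 * m ^ 2 - 2 * m - 2 + 4 * m * n + n * (n + 1) := by
  obtain ⟨E⟩ := h.nonempty_heisenbergBasis
  refine E.two_mul_multDim_heisForm (by lia) fun f hf k => ?_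
  obtain ⟨i, j, hij, hjk, hki⟩ := exists_heisForm_ne_zero_orthogonal (K := K) hmn k
  exact E.apply_inr_eq_zero hf hij hjk hki

theorem IsHeisEven.multDim_eq_zero (h : A.IsHeisEven 0 1) (h3 : (3 : K) ≠ 0) :
    A.multDim = 0 := by
  obtain ⟨E⟩ := h.nonempty_heisenbergBasis
  have hdim := E.two_mul_multDim_heisForm one_pos fun f hf k => by
    rcases k with k | k
    · exact k.elim0
    · exact E.apply_inr_eq_zero_of_odd h3 hf rfl (by simp [heisForm])
  simpa using hdim

theorem IsHeisEven.multDim_eq_two (h : A.IsHeisEven 1 0) : A.multDim = 2 := by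
  obtain ⟨E⟩ := h.nonempty_heisenbergBasis
  refine (E.reindex (Equiv.sumEmpty (Fin 2) (Fin 0)).symm).multDim_eq_two fun h0 => ?_
  have h01 := congrFun (congrFun h0 0) 1
  simp [heisForm] at h01

end HeisEven

end SuperLie

/-- For the special Heisenberg Lie superalgebra `H(m,n)` with even
center, `dim M(H(m,n)) = 2m² - m - 1 + 2mn + n(n+1)/2` when `m+n ≥ 2`,
`dim M(H(0,1)) = 0`, and `dim M(H(1,0)) = 2`. (The first equation is stated
multiplied by `2` in `ℤ` to avoid fractions.) -/
theorem stmt6 {K : Type} [Field K] (h2 : (2 : K) ≠ 0) (h3 : (3 : K) ≠ 0)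
    (A : SuperLie K) [FiniteDimensional K A.carrier] (m n : ℕ)
    (h : A.IsHeisEven m n) :
    (2 ≤ m + n →
      2 * (A.multDim : ℤ) = 4 * m^2 - 2 * m - 2 + 4 * m * n + n * (n + 1)) ∧
    (m = 0 → n = 1 → A.multDim = 0) ∧
    (m = 1 → n = 0 → A.multDim = 2) := by
  have : NeZero (2 : K) := ⟨h2⟩
  refine ⟨h.two_mul_multDim, ?_, ?_⟩
  · rintro rfl rfl
    exact h.multDim_eq_zero h3
  · rintro rfl rfl
    exact h.multDim_eq_two
end

section
/- There is no nilpotent Lie superalgebra L of total dimension 3 with dim Z(L) = 2 and dim L' = 2 (and likewise none with dim Z(L) = 1 and dim L' = 2), over a field of characteristic ≠ 2,3. -/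
open Module Function TensorProduct

open SuperLie

/-!
A nilpotent algebra is generated by any subspace that spans it modulo its derived subalgebra. If
`L'` has codimension at most one, then a homogeneous element outside `L'` spans `L` modulo `L'`, so
`L` is generated by a single homogeneous `x`. Since `[x, x]` is even, `[[x, x], [x, x]] = 0`, and
the Jacobi identity for `x, x, x` gives `3 [x, [x, x]] = 0` when `x` is odd. Hence `x` and `[x, x]`
already span `L`.
-/

theorem span_singleton_sup_eq_top {K V : Type*} [DivisionRing K] [AddCommGroup V] [Module K V]
    {N : Submodule K V} (hN : Module.rank K (V ⧸ N) ≤ 1) {x : V} (hx : x ∉ N) :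
    K ∙ x ⊔ N = ⊤ := by
  obtain ⟨v, hv⟩ := rank_le_one_iff.mp hN
  obtain ⟨r, hr⟩ := hv (N.mkQ x)
  have hr0 : r ≠ 0 := by
    rintro rfl
    exact hx ((Submodule.Quotient.mk_eq_zero N).mp (by simpa using hr.symm))
  rw [sup_comm, ← Submodule.map_mkQ_eq_top, Submodule.map_span, Set.image_singleton,
    Submodule.span_singleton_eq_top_iff]
  intro w
  obtain ⟨s, rfl⟩ := hv w
  exact ⟨s * r⁻¹, by rw [← hr, mul_smul, inv_smul_smul₀ hr0]⟩

namespace SuperLie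

variable {K : Type} [Field K] {A : SuperLie K}

theorem mem_evenPart_iff {x : A.carrier} : x ∈ A.evenPart ↔ A.J x = x := by
  simp [evenPart, sub_eq_zero]

theorem mem_oddPart_iff {x : A.carrier} : x ∈ A.oddPart ↔ A.J x = -x := by
  simp [oddPart, add_eq_zero_iff_eq_neg]

theorem evenPart_sup_oddPart (A : SuperLie K) (h2 : (2 : K) ≠ 0) : A.evenPart ⊔ A.oddPart = ⊤ := by
  refine eq_top_iff.mpr fun x _ => Submodule.mem_sup.mpr
    ⟨(2⁻¹ : K) • (x + A.J x), ?_, (2⁻¹ : K) • (x - A.J x), ?_, ?_⟩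
  · rw [mem_evenPart_iff, map_smul, map_add, A.J_inv, add_comm]
  · rw [mem_oddPart_iff, map_smul, map_sub, A.J_inv, ← smul_neg, neg_sub]
  · rw [← smul_add, add_add_sub_cancel, ← two_smul K x, inv_smul_smul₀ h2]

/-- Homogeneous elements, those lying in one of the two graded parts; `0` is included. -/
def IsHomogeneous (A : SuperLie K) (x : A.carrier) : Prop :=
  x ∈ A.evenPart ∨ x ∈ A.oddPart

theorem exists_even_add_odd (h2 : (2 : K) ≠ 0) (x : A.carrier) :
    ∃ x₀ ∈ A.evenPart, ∃ x₁ ∈ A.oddPart, x₀ + x₁ = x :=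
  Submodule.mem_sup.mp (A.evenPart_sup_oddPart h2 ▸ Submodule.mem_top)

theorem exists_homogeneous_span_sup_eq_top (h2 : (2 : K) ≠ 0) {N : Submodule K A.carrier}
    (hN : Module.rank K (A.carrier ⧸ N) ≤ 1) :
    ∃ x, A.IsHomogeneous x ∧ K ∙ x ⊔ N = ⊤ := by
  by_cases hhom : ∃ x, A.IsHomogeneous x ∧ x ∉ N
  · obtain ⟨x, hx, hxN⟩ := hhom
    exact ⟨x, hx, span_singleton_sup_eq_top hN hxN⟩
  · push Not at hhom
    have hNtop : N = ⊤ := by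
      rw [eq_top_iff, ← A.evenPart_sup_oddPart h2]
      exact sup_le (fun x hx => hhom x (.inl hx)) fun x hx => hhom x (.inr hx)
    exact ⟨0, .inl (zero_mem _), by rw [hNtop, sup_top_eq]⟩

-- Graded skew-symmetry for inhomogeneous elements: for `i j : ℤ/2`, twice the sign `(-1) ^ (i * j)`
-- is `1 + (-1) ^ i + (-1) ^ j - (-1) ^ (i + j)`, and `J` multiplies degree `i` by `(-1) ^ i`.
theorem two_smul_br (h2 : (2 : K) ≠ 0) (x y : A.carrier) :
    (2 : K) • A.br x y =
      A.br (A.J y) (A.J x) - A.br (A.J y) x - A.br y (A.J x) - A.br y x := by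
  obtain ⟨x₀, hx₀, x₁, hx₁, rfl⟩ := exists_even_add_odd h2 x
  obtain ⟨y₀, hy₀, y₁, hy₁, rfl⟩ := exists_even_add_odd h2 y
  rw [mem_evenPart_iff] at hx₀ hy₀
  rw [mem_oddPart_iff] at hx₁ hy₁
  have h₁₀ : A.br x₁ y₀ = -A.br y₀ x₁ := by rw [A.skew_e y₀ x₁ hy₀, neg_neg]
  simp only [map_add, LinearMap.add_apply, hx₀, hx₁, hy₀, hy₁, A.skew_e x₀ _ hx₀, h₁₀,
    A.skew_o x₁ y₁ hx₁ hy₁, map_neg, LinearMap.neg_apply]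
  module

theorem J_mem_lcs {k : ℕ} {x : A.carrier} (hx : x ∈ A.lcs k) : A.J x ∈ A.lcs k := by
  induction k generalizing x with
  | zero => exact Submodule.mem_top
  | succ k ih =>
    suffices A.lcs (k + 1) ≤ (A.lcs (k + 1)).comap A.J from this hx
    refine Submodule.span_le.mpr ?_
    rintro _ ⟨c, hc, y, rfl⟩
    exact Submodule.subset_span ⟨A.J c, ih hc, A.J y, (A.J_br c y).symm⟩

theorem br_mem_lcs_succ_of_left {k : ℕ} {x : A.carrier} (hx : x ∈ A.lcs k) (y : A.carrier) :
    A.br x y ∈ A.lcs (k + 1) :=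
  Submodule.subset_span ⟨x, hx, y, rfl⟩

theorem br_mem_lcs_succ_of_right (h2 : (2 : K) ≠ 0) {k : ℕ} (x : A.carrier) {y : A.carrier}
    (hy : y ∈ A.lcs k) : A.br x y ∈ A.lcs (k + 1) := by
  rw [← Submodule.smul_mem_iff _ h2, two_smul_br h2]
  have left {c : A.carrier} (hc : c ∈ A.lcs k) := br_mem_lcs_succ_of_left hc
  exact sub_mem (sub_mem (sub_mem (left (J_mem_lcs hy) _) (left (J_mem_lcs hy) _))
    (left hy _)) (left hy _)

theorem sup_lcs_eq_top (h2 : (2 : K) ≠ 0) {S : Submodule K A.carrier}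
    (hS : ∀ x ∈ S, ∀ y ∈ S, A.br x y ∈ S) (hsup : S ⊔ A.derived = ⊤) (k : ℕ) :
    S ⊔ A.lcs k = ⊤ := by
  induction k with
  | zero => exact sup_top_eq _
  | succ k ih =>
    rw [eq_top_iff, ← hsup]
    refine sup_le le_sup_left (Submodule.span_le.mpr ?_)
    rintro _ ⟨x, y, rfl⟩
    obtain ⟨s, hs, c, hc, rfl⟩ := Submodule.mem_sup.mp (ih ▸ Submodule.mem_top : x ∈ S ⊔ A.lcs k)
    obtain ⟨t, ht, d, hd, rfl⟩ := Submodule.mem_sup.mp (ih ▸ Submodule.mem_top : y ∈ S ⊔ A.lcs k)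
    have hexpand : A.br (s + c) (t + d) = A.br s t + (A.br s d + A.br c (t + d)) := by
      simp only [map_add, LinearMap.add_apply]
      abel
    rw [hexpand]
    exact Submodule.add_mem_sup (hS s hs t ht)
      (add_mem (br_mem_lcs_succ_of_right h2 s hd) (br_mem_lcs_succ_of_left hc _))

theorem IsNilpotent.eq_top_of_sup_derived_eq_top (hnil : A.IsNilpotent) (h2 : (2 : K) ≠ 0)
    {S : Submodule K A.carrier} (hS : ∀ x ∈ S, ∀ y ∈ S, A.br x y ∈ S)
    (hsup : S ⊔ A.derived = ⊤) : S = ⊤ := by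
  obtain ⟨k, hk⟩ := hnil
  simpa only [hk, sup_bot_eq] using sup_lcs_eq_top h2 hS hsup k

theorem br_self_eq_zero_of_mem_evenPart (h2 : (2 : K) ≠ 0) {x : A.carrier}
    (hx : x ∈ A.evenPart) : A.br x x = 0 := by
  have hneg := A.skew_e x x (mem_evenPart_iff.mp hx)
  have htwo : (2 : K) • A.br x x = 0 := by rw [two_smul, ← eq_neg_iff_add_eq_zero, ← hneg]
  exact (smul_eq_zero.mp htwo).resolve_left h2

theorem br_self_mem_evenPart {x : A.carrier} (hx : A.IsHomogeneous x) :
    A.br x x ∈ A.evenPart := by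
  rw [mem_evenPart_iff, A.J_br]
  rcases hx with hx | hx
  · rw [mem_evenPart_iff.mp hx]
  · simp only [mem_oddPart_iff.mp hx, map_neg, LinearMap.neg_apply, neg_neg]

theorem br_br_self (h2 : (2 : K) ≠ 0) (h3 : (3 : K) ≠ 0)
    {x : A.carrier} (hx : A.IsHomogeneous x) : A.br x (A.br x x) = 0 := by
  rcases hx with hx | hx
  · rw [br_self_eq_zero_of_mem_evenPart h2 hx, map_zero]
  · have hJ := mem_oddPart_iff.mp hx
    have hjac := A.jacobi true true true x x x hJ hJ hJ
    simp only [Bool.and_self, if_true] at hjac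
    have hthree : (3 : K) • A.br x (A.br x x) = 0 := by
      rw [← neg_eq_zero, ← hjac]
      module
    exact (smul_eq_zero.mp hthree).resolve_left h3

theorem br_mem_span_pair_br_self (h2 : (2 : K) ≠ 0) (h3 : (3 : K) ≠ 0)
    {x : A.carrier} (hx : A.IsHomogeneous x) :
    ∀ s ∈ Submodule.span K {x, A.br x x}, ∀ t ∈ Submodule.span K {x, A.br x x},
      A.br s t ∈ Submodule.span K {x, A.br x x} := by
  have heven := br_self_mem_evenPart hx
  have hxy := br_br_self h2 h3 hx
  have hyx : A.br (A.br x x) x = 0 := by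
    rw [A.skew_e _ x (mem_evenPart_iff.mp heven), hxy, neg_zero]
  intro s hs t ht
  obtain ⟨a, b, rfl⟩ := Submodule.mem_span_pair.mp hs
  obtain ⟨c, d, rfl⟩ := Submodule.mem_span_pair.mp ht
  simp only [map_add, map_smul, LinearMap.add_apply, LinearMap.smul_apply, hxy, hyx,
    br_self_eq_zero_of_mem_evenPart h2 heven, smul_zero, add_zero]
  exact Submodule.smul_mem _ _ (Submodule.smul_mem _ _ (Submodule.subset_span (by simp)))

end SuperLie

theorem stmt9_general {K : Type} [Field K] (h2 : (2 : K) ≠ 0) (h3 : (3 : K) ≠ 0)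
    (A : SuperLie K) (hnil : A.IsNilpotent) (hdim : 2 < Module.rank K A.carrier) :
    1 < Module.rank K (A.carrier ⧸ A.derived) := by
  by_contra! hcodim
  obtain ⟨x, hx, hsup⟩ := exists_homogeneous_span_sup_eq_top h2 hcodim
  have hgen : Submodule.span K {x, A.br x x} = ⊤ := by
    refine hnil.eq_top_of_sup_derived_eq_top h2 (br_mem_span_pair_br_self h2 h3 hx) ?_
    refine top_le_iff.mp (hsup ▸ sup_le_sup_right (Submodule.span_mono ?_) _)
    simp
  refine hdim.not_ge ?_
  calc Module.rank K A.carrier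
      = Module.rank K (Submodule.span K {x, A.br x x}) := by rw [hgen, rank_top]
    _ ≤ Cardinal.mk ({x, A.br x x} : Set A.carrier) := rank_span_le _
    _ ≤ 1 + 1 := Cardinal.mk_insert_le.trans_eq (by rw [Cardinal.mk_singleton])
    _ = 2 := one_add_one_eq_two

/-- There is no nilpotent Lie superalgebra of total dimension 3
with `dim Z(L) = 2` and `dim L' = 2`, nor with `dim Z(L) = 1` and `dim L' = 2`. -/
theorem stmt9 {K : Type} [Field K] (h2 : (2 : K) ≠ 0) (h3 : (3 : K) ≠ 0)
    (A : SuperLie K) [FiniteDimensional K A.carrier]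
    (hnil : A.IsNilpotent) (hdim : finrank K A.carrier = 3) :
    ¬ (finrank K A.center = 2 ∧ finrank K A.derived = 2) ∧
    ¬ (finrank K A.center = 1 ∧ finrank K A.derived = 2) := by
  have hcodim := stmt9_general h2 h3 A hnil (by rw [← finrank_eq_rank, hdim]; norm_num)
  rw [← finrank_eq_rank, Nat.one_lt_cast] at hcodim
  have hsum := A.derived.finrank_quotient_add_finrank
  omega
end
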